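/- arXiv:0803.3373 — 3 statements merged into one kernel-verified Lean document; each statement's English description precedes it below -/
import Mathlib

section
/- Let k be a perfect field of characteristic p > 0 and let A be a finitely generated additive submonoid of ℤ^d (viewed inside ℚ^d) which generates ℤ^d as a group and satisfies A ∩ (−A) = {0}. Then the inclusion of monoid algebras k[A] ⊆ k[(1/p)·A] admits a k[A]-module retraction (i.e., the inclusion splits as a map of k[A]-modules) if and only if for every m ∈ ℤ^d with p·m ∈ A one has m ∈ A. -/
/-!
Let `H` be the group generated by `A`, and let `B ⊇ A`. A `k[A]`-linear retraction `φ` of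
`k[A] ⊆ k[B]` must fix every monomial `x ^ m` with `m ∈ B ∩ H`: writing `m = a - b` with
`a, b ∈ A`, we get `x ^ b * φ (x ^ m) = φ (x ^ a) = x ^ a`, and `x ^ b` is cancellable. Hence
`B ∩ H ⊆ A`. Conversely, since `H` is a group, translation by an element of `H` preserves both
`H` and its complement, so discarding the monomials outside `H` is a `k[H]`-linear projection
of `k[G]`; if `B ∩ H ⊆ A`, it maps `k[B]` to `k[A]`.
-/

open AddMonoidAlgebra

theorem exists_add_eq_of_mem_addSubgroup_closure {G : Type*} [AddCommGroup G] {A : AddSubmonoid G}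
    {m : G} (hm : m ∈ AddSubgroup.closure (A : Set G)) : ∃ a ∈ A, ∃ b ∈ A, b + m = a := by
  induction hm using AddSubgroup.closure_induction with
  | mem a ha => exact ⟨a, ha, 0, A.zero_mem, zero_add a⟩
  | zero => exact ⟨0, A.zero_mem, 0, A.zero_mem, add_zero 0⟩
  | add m n _ _ ihm ihn =>
    obtain ⟨a, ha, b, hb, rfl⟩ := ihm
    obtain ⟨a', ha', b', hb', rfl⟩ := ihn
    exact ⟨_, A.add_mem ha ha', b + b', A.add_mem hb hb', add_add_add_comm b b' m n⟩
  | neg m _ ih =>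
    obtain ⟨a, ha, b, hb, rfl⟩ := ih
    exact ⟨b, hb, b + m, ha, add_neg_cancel_right b m⟩

theorem addSubgroup_closure_eq_of_forall_exists_sub {G : Type*} [AddGroup G] {A : Set G}
    {H : AddSubgroup G} (hAH : A ⊆ H) (hsub : ∀ m ∈ H, ∃ a ∈ A, ∃ b ∈ A, m = a - b) :
    AddSubgroup.closure A = H := by
  refine le_antisymm ((AddSubgroup.closure_le H).2 hAH) fun m hm => ?_
  obtain ⟨a, ha, b, hb, rfl⟩ := hsub m hm
  exact sub_mem (AddSubgroup.subset_closure ha) (AddSubgroup.subset_closure hb)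

theorem single_mem_supported {k G : Type*} [Semiring k] {s : Set G} {m : G} (hm : m ∈ s) (r : k) :
    single m r ∈ supported k k s :=
  Finsupp.single_mem_supported k r hm

section SupportProjection

variable {k G : Type*} [Semiring k]

variable (k) in
open Classical in
/-- The `k`-linear projection of `k[G]` onto the elements supported on `s`, which discards the
terms with exponent outside `s`. -/
noncomputable def supportProjection (s : Set G) : AddMonoidAlgebra k G →ₗ[k] AddMonoidAlgebra k G :=
  (coeffLinearEquiv k).symm.toLinearMap ∘ₗ (Finsupp.supported k k s).subtype ∘ₗ
    Finsupp.restrictDom k k s ∘ₗ (coeffLinearEquiv k).toLinearMap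

open Classical in
theorem coeff_supportProjection (s : Set G) (v : AddMonoidAlgebra k G) :
    (supportProjection k s v).coeff = v.coeff.filter (· ∈ s) := rfl

theorem supportProjection_mem_supported_inter (s : Set G) {t : Set G} {v : AddMonoidAlgebra k G}
    (hv : v ∈ supported k k t) : supportProjection k s v ∈ supported k k (t ∩ s) := by
  classical
  rw [mem_supported, coeff_supportProjection, Finsupp.support_filter, Finset.coe_filter]
  exact fun m hm => ⟨hv hm.1, hm.2⟩

theorem supportProjection_eq_self {s : Set G} {v : AddMonoidAlgebra k G}
    (hv : v ∈ supported k k s) : supportProjection k s v = v := by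
  classical
  apply coeff_injective
  rw [coeff_supportProjection, Finsupp.filter_eq_self_iff]
  exact fun m hm => hv (Finsupp.mem_support_iff.2 hm)

theorem supportProjection_single_mul [AddGroup G] {H : AddSubgroup G} {g : G} (hg : g ∈ H) (r : k)
    (v : AddMonoidAlgebra k G) :
    supportProjection k H (single g r * v) = single g r * supportProjection k H v := by
  classical
  ext m
  have hm : -g + m ∈ H ↔ m ∈ H := H.add_mem_cancel_left (H.neg_mem hg)
  simp only [coeff_supportProjection, Finsupp.filter_apply, coeff_single_mul_apply,
    SetLike.mem_coe, hm, mul_ite, mul_zero]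

theorem supportProjection_mul [AddGroup G] {H : AddSubgroup G} {u : AddMonoidAlgebra k G}
    (hu : u ∈ supported k k H) (v : AddMonoidAlgebra k G) :
    supportProjection k H (u * v) = u * supportProjection k H v := by
  rw [← sum_coeff_single u, Finsupp.sum, Finset.sum_mul, Finset.sum_mul, map_sum]
  exact Finset.sum_congr rfl fun g hg => supportProjection_single_mul (hu hg) _ v

end SupportProjection

/-- `φ` restricts to a `k[A]`-linear retraction of the inclusion `k[A] ⊆ k[B]`, when `A ⊆ B` are
submonoids of `G`. As in the realization of `k[A]` and `k[B]` inside `k[G]`, the map `φ` is defined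
on all of `k[G]`, with no condition on its values outside `k[B]`. -/
def IsSupportedRetraction {k G : Type*} [Semiring k] [Add G] (A B : Set G)
    (φ : AddMonoidAlgebra k G →ₗ[k] AddMonoidAlgebra k G) : Prop :=
  (∀ v, v ∈ supported k k B → φ v ∈ supported k k A) ∧
    (∀ u v, u ∈ supported k k A → v ∈ supported k k B → φ (u * v) = u * φ v) ∧
    ∀ v, v ∈ supported k k A → φ v = v

theorem IsSupportedRetraction.mem_of_add_mem {k G : Type*} [Semiring k] [Nontrivial k] [Add G]
    [IsLeftCancelAdd G] {A B : Set G} {φ : AddMonoidAlgebra k G →ₗ[k] AddMonoidAlgebra k G}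
    (hφ : IsSupportedRetraction A B φ) {b m : G} (hb : b ∈ A) (hm : m ∈ B) (hbm : b + m ∈ A) :
    m ∈ A := by
  obtain ⟨hφA, hφmul, hφid⟩ := hφ
  have hmul : single b 1 * φ (single m 1) = single (b + m) 1 := by
    rw [← hφmul _ _ (single_mem_supported hb 1) (single_mem_supported hm 1), single_mul_single,
      one_mul, hφid _ (single_mem_supported hbm 1)]
  have hcoeff : (single b 1 * φ (single m 1)).coeff (b + m) = 1 * (φ (single m 1)).coeff m :=
    coeff_single_mul_eq_mul_coeff m fun _ _ => add_right_inj b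
  rw [hmul, coeff_single, Finsupp.single_eq_same, one_mul] at hcoeff
  refine hφA _ (single_mem_supported hm 1) (Finsupp.mem_support_iff.2 ?_)
  exact hcoeff.symm.trans_ne one_ne_zero

theorem isSupportedRetraction_supportProjection (k : Type*) {G : Type*} [Semiring k] [AddGroup G]
    {A B : Set G} {H : AddSubgroup G} (hAH : A ⊆ H) (hBH : B ∩ H ⊆ A) :
    IsSupportedRetraction A B (supportProjection k (H : Set G)) :=
  ⟨fun _ hv => supported_mono hBH (supportProjection_mem_supported_inter _ hv),
    fun _ v hu _ => supportProjection_mul (supported_mono hAH hu) v,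
    fun _ hv => supportProjection_eq_self (supported_mono hAH hv)⟩

theorem F_pure_iff_weaklyNormal_general (k : Type*) {G : Type*} [Semiring k] [Nontrivial k]
    [AddCommGroup G] (A : AddSubmonoid G) (B : Set G) :
    (∃ φ : AddMonoidAlgebra k G →ₗ[k] AddMonoidAlgebra k G, IsSupportedRetraction A B φ) ↔
      ∀ m ∈ AddSubgroup.closure (A : Set G), m ∈ B → m ∈ A := by
  constructor
  · rintro ⟨φ, hφ⟩ m hm hmB
    obtain ⟨a, ha, b, hb, rfl⟩ := exists_add_eq_of_mem_addSubgroup_closure hm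
    exact hφ.mem_of_add_mem hb hmB ha
  · intro h
    exact ⟨_, isSupportedRetraction_supportProjection k AddSubgroup.subset_closure
      fun m hm => h m hm.2 hm.1⟩

/-- The subgroup `ℤ^ι` of `ℚ^ι`. -/
def integerVectors (ι : Type*) : AddSubgroup (ι → ℚ) :=
  AddSubgroup.pi Set.univ fun _ => (Int.castAddHom ℚ).range

theorem mem_integerVectors {ι : Type*} {m : ι → ℚ} :
    m ∈ integerVectors ι ↔ ∀ i, ∃ z : ℤ, m i = (z : ℚ) := by
  simp only [integerVectors, AddSubgroup.mem_pi, Set.mem_univ, true_imp_iff,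
    AddMonoidHom.mem_range, Int.coe_castAddHom, eq_comm]

theorem addSubgroup_closure_eq_integerVectors {ι : Type*} {A : Set (ι → ℚ)}
    (hAint : ∀ a ∈ A, ∀ i, ∃ z : ℤ, a i = (z : ℚ))
    (hAgen : ∀ m : ι → ℚ, (∀ i, ∃ z : ℤ, m i = (z : ℚ)) → ∃ a ∈ A, ∃ b ∈ A, m = a - b) :
    AddSubgroup.closure A = integerVectors ι :=
  addSubgroup_closure_eq_of_forall_exists_sub (fun a ha => mem_integerVectors.2 (hAint a ha))
    fun m hm => hAgen m (mem_integerVectors.1 hm)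

/-- Let `k` be a perfect field of characteristic `p > 0` and let `A` be a finitely generated
additive submonoid of `ℤ^d` (viewed inside `ℚ^d`) which generates `ℤ^d` as a group and
satisfies `A ∩ (-A) = {0}`. We realize the monoid algebras `k[A] ⊆ k[(1/p)A]` inside the
monoid algebra `k[ℚ^d]` as the elements supported on `A`, resp. on `(1/p)A = {m | p•m ∈ A}`.
Then the inclusion `k[A] ⊆ k[(1/p)A]` admits a `k[A]`-module retraction — a `k`-linear map
`φ` sending `k[(1/p)A]` into `k[A]`, with `φ(u·v) = u·φ(v)` for `u ∈ k[A]`, `v ∈ k[(1/p)A]`,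
and restricting to the identity on `k[A]` — if and only if every `m ∈ ℤ^d` with `p•m ∈ A`
lies in `A` (i.e. `k[A]` is weakly normal). -/
theorem F_pure_iff_weaklyNormal (k : Type*) [Field k] (p : ℕ) [Fact p.Prime] [CharP k p]
    [PerfectField k] (d : ℕ) (A : AddSubmonoid (Fin d → ℚ))
    (hAint : ∀ a ∈ A, ∀ i, ∃ z : ℤ, a i = (z : ℚ))
    (hAfg : A.FG)
    (hAgen : ∀ m : Fin d → ℚ, (∀ i, ∃ z : ℤ, m i = (z : ℚ)) → ∃ a ∈ A, ∃ b ∈ A, m = a - b)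
    (hAvertex : ∀ a ∈ A, -a ∈ A → a = 0) :
    (∃ φ : AddMonoidAlgebra k (Fin d → ℚ) →ₗ[k] AddMonoidAlgebra k (Fin d → ℚ),
        (∀ v : AddMonoidAlgebra k (Fin d → ℚ), (↑v.coeff.support : Set (Fin d → ℚ)) ⊆
            {m : Fin d → ℚ | (p : ℚ) • m ∈ A} →
            (↑(φ v).coeff.support : Set (Fin d → ℚ)) ⊆ (A : Set (Fin d → ℚ))) ∧
        (∀ u v : AddMonoidAlgebra k (Fin d → ℚ),
            (↑u.coeff.support : Set (Fin d → ℚ)) ⊆ (A : Set (Fin d → ℚ)) →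
            (↑v.coeff.support : Set (Fin d → ℚ)) ⊆ {m : Fin d → ℚ | (p : ℚ) • m ∈ A} →
            φ (u * v) = u * φ v) ∧
        (∀ v : AddMonoidAlgebra k (Fin d → ℚ),
            (↑v.coeff.support : Set (Fin d → ℚ)) ⊆ (A : Set (Fin d → ℚ)) → φ v = v)) ↔
    (∀ m : Fin d → ℚ, (∀ i, ∃ z : ℤ, m i = (z : ℚ)) → (p : ℚ) • m ∈ A → m ∈ A) := by
  have hclosure := addSubgroup_closure_eq_integerVectors (A := (A : Set (Fin d → ℚ))) hAint hAgen
  simp only [← mem_integerVectors, ← hclosure]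
  exact F_pure_iff_weaklyNormal_general k A {m | (p : ℚ) • m ∈ A}
end

section
/- Let k be a field of characteristic p > 0 and let A be an additive submonoid of ℤ^d (viewed inside ℚ^d). Assume that for every m ∈ ℤ^d with p·m ∈ A one has m ∈ A. Then the k-linear map φ : k[(1/p)·A] → k[A] determined on basis elements by φ(x^m) = x^m if m ∈ A and φ(x^m) = 0 if m ∉ A satisfies φ(u·v) = u·φ(v) for all u ∈ k[A] and v ∈ k[(1/p)·A], and φ restricts to the identity on k[A]; in particular φ is a k[A]-module retraction of the inclusion k[A] ⊆ k[(1/p)·A]. -/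
open Finsupp
open scoped Classical

/-- The `k`-linear map on the monoid algebra `k[ℚ^d]` determined on basis elements by
`φ(xᵐ) = xᵐ` if `m ∈ A` and `φ(xᵐ) = 0` otherwise. -/
noncomputable def truncToMonoid (k : Type*) [Field k] {d : ℕ} (A : AddSubmonoid (Fin d → ℚ)) :
    AddMonoidAlgebra k (Fin d → ℚ) →ₗ[k] AddMonoidAlgebra k (Fin d → ℚ) :=
  letI : DecidablePred (· ∈ A) := Classical.decPred _
  { toFun := fun f => AddMonoidAlgebra.ofCoeff (Finsupp.filter (· ∈ A) f.coeff)
    map_add' := fun _ _ => congrArg AddMonoidAlgebra.ofCoeff Finsupp.filter_add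
    map_smul' := fun _ _ => congrArg AddMonoidAlgebra.ofCoeff Finsupp.filter_smul }

/-! If `a ∈ A`, `m ∈ (1/p)A` and `a + m ∈ A`, then `m = (a + m) - a` is integral, so `m ∈ A` by weak
normality. Hence translation by an element of `A` preserves both `A` and its complement in
`(1/p)A`, and so multiplication by `xᵃ` commutes with discarding the monomials outside `A`. -/

section Truncation

open scoped AddMonoidAlgebra

variable {R M : Type*} [Semiring R]

variable (R) in
/-- The projection of `R[M]` onto the elements supported on a subset `S` of `M`, which discards the
monomials with exponent outside `S`. As for `truncToMonoid`, the codomain is all of `R[M]`. -/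
noncomputable def truncation (S : Set M) : R[M] →ₗ[R] R[M] where
  toFun f := .ofCoeff (f.coeff.filter (· ∈ S))
  map_add' _ _ := congrArg AddMonoidAlgebra.ofCoeff Finsupp.filter_add
  map_smul' _ _ := congrArg AddMonoidAlgebra.ofCoeff Finsupp.filter_smul

theorem coeff_truncation (S : Set M) (f : R[M]) :
    (truncation R S f).coeff = f.coeff.filter (· ∈ S) :=
  rfl

theorem truncToMonoid_eq_truncation (k : Type*) [Field k] {d : ℕ}
    (A : AddSubmonoid (Fin d → ℚ)) : truncToMonoid k A = truncation k (A : Set (Fin d → ℚ)) :=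
  rfl

theorem truncation_single (S : Set M) (m : M) (c : R) :
    truncation R S (.single m c) = if m ∈ S then .single m c else 0 := by
  split_ifs with hm
  · exact congrArg AddMonoidAlgebra.ofCoeff (Finsupp.filter_single_of_pos (· ∈ S) hm)
  · exact congrArg AddMonoidAlgebra.ofCoeff (Finsupp.filter_single_of_neg (· ∈ S) hm)

theorem truncation_mem_supported (S : Set M) (f : R[M]) :
    truncation R S f ∈ AddMonoidAlgebra.supported R R S :=
  AddMonoidAlgebra.mem_supported'.2 fun _ hm => by
    rw [coeff_truncation, Finsupp.filter_apply_neg _ _ hm]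

theorem truncation_eq_self {S : Set M} {f : R[M]} (hf : f ∈ AddMonoidAlgebra.supported R R S) :
    truncation R S f = f :=
  congrArg AddMonoidAlgebra.ofCoeff <|
    (Finsupp.filter_eq_self_iff _ _).2 fun _ hm => hf (Finsupp.mem_support_iff.2 hm)

theorem truncation_mul [Add M] {S : Set M} {u v : R[M]}
    (h : ∀ a ∈ u.coeff.support, ∀ m ∈ v.coeff.support, a + m ∈ S ↔ m ∈ S) :
    truncation R S (u * v) = u * truncation R S v := by
  have monomial_mul : ∀ a ∈ u.coeff.support, ∀ m ∈ v.coeff.support, ∀ b c : R,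
      truncation R S (.single a b * .single m c) =
        .single a b * truncation R S (.single m c) := by
    intro a ha m hm b c
    simp only [AddMonoidAlgebra.single_mul_single, truncation_single, h a ha m hm, mul_ite,
      mul_zero]
  rw [← u.sum_coeff_single, ← v.sum_coeff_single]
  simp only [Finsupp.sum, Finset.sum_mul_sum, map_sum]
  exact Finset.sum_congr rfl fun a ha => Finset.sum_congr rfl fun m hm =>
    monomial_mul a ha m hm _ _

theorem add_mem_iff_of_inter_subset [AddGroup M] {A : AddSubmonoid M} {L : AddSubgroup M}
    {B : Set M} (hAL : (A : Set M) ⊆ L) (hBL : B ∩ L ⊆ A) {a m : M} (ha : a ∈ A) (hm : m ∈ B) :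
    a + m ∈ A ↔ m ∈ A :=
  ⟨fun ham => hBL ⟨hm, (L.add_mem_cancel_left (hAL ha)).1 (hAL ham)⟩, A.add_mem ha⟩

/-- Weak normality of `A` is the hypothesis `hBL` for `L = ℤ^d` and `B = (1/p)A`. -/
theorem weaklyNormal_retraction_general [AddGroup M] {A : AddSubmonoid M} {L : AddSubgroup M}
    {B : Set M} (hAL : (A : Set M) ⊆ L) (hBL : B ∩ L ⊆ A) :
    (∀ (m : M) (c : R), truncation R A (.single m c) = if m ∈ A then .single m c else 0) ∧
    (∀ v : R[M], truncation R A v ∈ AddMonoidAlgebra.supported R R (A : Set M)) ∧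
    (∀ u v : R[M], u ∈ AddMonoidAlgebra.supported R R (A : Set M) →
      v ∈ AddMonoidAlgebra.supported R R B → truncation R A (u * v) = u * truncation R A v) ∧
    (∀ v : R[M], v ∈ AddMonoidAlgebra.supported R R (A : Set M) → truncation R A v = v) :=
  ⟨truncation_single (A : Set M), truncation_mem_supported (A : Set M),
    fun _ _ hu hv => truncation_mul fun _ ha _ hm =>
      add_mem_iff_of_inter_subset hAL hBL (hu ha) (hv hm),
    fun _ => truncation_eq_self⟩

end Truncation

/-- The vectors with integer entries, as a subgroup of `ι → R`; for `R = ℚ` this is the lattice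
`ℤ^d` inside `ℚ^d`. -/
def integralVectors (ι R : Type*) [AddGroupWithOne R] : AddSubgroup (ι → R) :=
  AddSubgroup.pi Set.univ fun _ => (Int.castAddHom R).range

theorem mem_integralVectors {ι R : Type*} [AddGroupWithOne R] {m : ι → R} :
    m ∈ integralVectors ι R ↔ ∀ i, ∃ z : ℤ, m i = z := by
  simp only [integralVectors, AddSubgroup.mem_pi, Set.mem_univ, true_imp_iff,
    AddMonoidHom.mem_range, Int.coe_castAddHom, eq_comm]

/-- Let `k` be a field of characteristic `p > 0` and `A` an additive submonoid of `ℤ^d`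
(viewed inside `ℚ^d`). If for every `m ∈ ℤ^d` with `p•m ∈ A` one has `m ∈ A` (weak
normality), then the `k`-linear map `φ : k[(1/p)A] → k[A]` with `φ(xᵐ) = xᵐ` for `m ∈ A`
and `φ(xᵐ) = 0` otherwise is a `k[A]`-module retraction of the inclusion
`k[A] ⊆ k[(1/p)A]`: it maps `k[(1/p)A]` into `k[A]`, satisfies `φ(u·v) = u·φ(v)` for
`u ∈ k[A]`, `v ∈ k[(1/p)A]`, and restricts to the identity on `k[A]`. -/
theorem weaklyNormal_retraction (k : Type*) [Field k] (p : ℕ) [Fact p.Prime] [CharP k p]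
    (d : ℕ) (A : AddSubmonoid (Fin d → ℚ))
    (hAint : ∀ a ∈ A, ∀ i, ∃ z : ℤ, a i = (z : ℚ))
    (hwn : ∀ m : Fin d → ℚ, (∀ i, ∃ z : ℤ, m i = (z : ℚ)) → (p : ℚ) • m ∈ A → m ∈ A) :
    (∀ (m : Fin d → ℚ) (c : k),
        truncToMonoid k A (AddMonoidAlgebra.single m c) =
          if m ∈ A then AddMonoidAlgebra.single m c else 0) ∧
    (∀ v : AddMonoidAlgebra k (Fin d → ℚ), (↑v.coeff.support : Set (Fin d → ℚ)) ⊆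
        {m : Fin d → ℚ | (p : ℚ) • m ∈ A} →
        (↑(truncToMonoid k A v).coeff.support : Set (Fin d → ℚ)) ⊆ (A : Set (Fin d → ℚ))) ∧
    (∀ u v : AddMonoidAlgebra k (Fin d → ℚ),
        (↑u.coeff.support : Set (Fin d → ℚ)) ⊆ (A : Set (Fin d → ℚ)) →
        (↑v.coeff.support : Set (Fin d → ℚ)) ⊆ {m : Fin d → ℚ | (p : ℚ) • m ∈ A} →
        truncToMonoid k A (u * v) = u * truncToMonoid k A v) ∧
    (∀ v : AddMonoidAlgebra k (Fin d → ℚ),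
        (↑v.coeff.support : Set (Fin d → ℚ)) ⊆ (A : Set (Fin d → ℚ)) → truncToMonoid k A v = v) := by
  rw [truncToMonoid_eq_truncation]
  obtain ⟨h_single, h_supported, h_mul, h_self⟩ :=
    weaklyNormal_retraction_general (R := k) (L := integralVectors (Fin d) ℚ)
      (B := {m | (p : ℚ) • m ∈ A}) (fun a ha => mem_integralVectors.2 (hAint a ha))
      fun m hm => hwn m (mem_integralVectors.1 hm.2) hm.1
  exact ⟨h_single, fun v _ => h_supported v, h_mul, h_self⟩
end

section
/- Let k be a perfect field of characteristic p > 0, n ≥ 2, and let g be a formal power series in k[[x₀, …, x_n]] which involves only the variables x₀, …, x_{n−2} and has zero constant term. Set f = g + x_{n−1}·x_n and let R = k[[x₀, …, x_n]]/(f). Then R is F-pure: there exists an additive (ℤ-linear) map φ : R → R such that φ(a^p · b) = a · φ(b) for all a, b ∈ R and φ(1) = 1. -/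
/-!
By Fedder's criterion, `S ⧸ (f)` is Frobenius split as soon as some `p⁻¹`-linear map
`ψ : S → S` satisfies `ψ (f ^ (p - 1)) = 1`: then `ψ (f ^ (p - 1) * ·)` preserves the ideal `(f)`
and descends to a splitting. For `f = g + x ^ d` with `d` squarefree and `g` free of a variable
`x_u` dividing `x ^ d`, take for `ψ` the coordinate functional of `x ^ ((p - 1) • d)` in the
expansion along monomials with `p`-th powers as coefficients. Every term of the binomial expansion
of `f ^ (p - 1)` other than `x ^ ((p - 1) • d)` has degree less than `p - 1` in `x_u`, so `ψ` kills
it.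
-/

section FrobeniusSplitting

variable {S : Type*} [CommRing S] {p : ℕ}

/-- A Cartier linear (or `p⁻¹`-linear) map: an `S`-linear map `F_* S → S`, where `F` is the `p`-th
power map, encoded as an additive map on `S` itself. -/
def IsCartierLinear (p : ℕ) (ψ : S →+ S) : Prop :=
  ∀ a b, ψ (a ^ p * b) = a * ψ b

/-- A Frobenius split (or F-pure) ring: a Cartier linear map sends `1` to `1`. The number
`p` is meant to be the characteristic exponent of `S`. -/
def IsFrobeniusSplit (p : ℕ) (S : Type*) [CommRing S] : Prop :=
  ∃ φ : S →+ S, IsCartierLinear p φ ∧ φ 1 = 1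

theorem IsCartierLinear.comp_mulLeft {ψ : S →+ S} (hψ : IsCartierLinear p ψ) (c : S) :
    IsCartierLinear p (ψ.comp (AddMonoidHom.mulLeft c)) := fun a b => by
  simp only [AddMonoidHom.comp_apply, AddMonoidHom.coe_mulLeft, mul_left_comm c, hψ a]

theorem IsCartierLinear.isFrobeniusSplit_quotient {ψ : S →+ S} (hψ : IsCartierLinear p ψ)
    {I : Ideal S} (hI : ∀ s ∈ I, ψ s ∈ I) (hone : ψ 1 - 1 ∈ I) : IsFrobeniusSplit p (S ⧸ I) := by
  let φ : S ⧸ I →+ S ⧸ I := QuotientAddGroup.map I.toAddSubgroup I.toAddSubgroup ψ hI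
  have hφ (s : S) : φ (Ideal.Quotient.mk I s) = Ideal.Quotient.mk I (ψ s) := rfl
  refine ⟨φ, fun a b => ?_, ?_⟩
  · obtain ⟨a, rfl⟩ := Ideal.Quotient.mk_surjective a
    obtain ⟨b, rfl⟩ := Ideal.Quotient.mk_surjective b
    rw [← map_pow, ← map_mul, hφ, hφ, hψ, map_mul]
  · rw [← map_one (Ideal.Quotient.mk I), hφ]
    exact Ideal.Quotient.eq.mpr hone

theorem IsCartierLinear.isFrobeniusSplit_quotient_span_singleton {ψ : S →+ S}
    (hψ : IsCartierLinear p ψ) (hp : p ≠ 0) {f : S} (hf : ψ (f ^ (p - 1)) = 1) :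
    IsFrobeniusSplit p (S ⧸ Ideal.span {f}) := by
  refine (hψ.comp_mulLeft (f ^ (p - 1))).isFrobeniusSplit_quotient (fun s hs => ?_) ?_
  · obtain ⟨c, rfl⟩ := Ideal.mem_span_singleton.mp hs
    have hpow : f ^ (p - 1) * (f * c) = f ^ p * c := by rw [← mul_assoc, pow_sub_one_mul hp]
    rw [AddMonoidHom.comp_apply, AddMonoidHom.coe_mulLeft, hpow, hψ]
    exact Ideal.mul_mem_right _ _ (Ideal.mem_span_singleton_self f)
  · simp [hf]

end FrobeniusSplitting

section PowerSeries

open MvPowerSeries Finset.HasAntidiagonal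

variable {σ R : Type*} [CommRing R]

theorem finsupp_le_of_smul_le_smul_add {p : ℕ} {i m e : σ →₀ ℕ} (he : ∀ s, e s < p)
    (h : p • i ≤ p • m + e) : i ≤ m := fun s => by
  have hs : p * i s < p * (m s + 1) := by
    have := h s
    simp only [Finsupp.add_apply, Finsupp.smul_apply, smul_eq_mul] at this
    linarith [he s]
  exact Nat.lt_succ_iff.mp (lt_of_mul_lt_mul_left' hs)

theorem coeff_smul_add_expand_mul [DecidableEq σ] {p : ℕ} (hp : p ≠ 0) {e : σ →₀ ℕ}
    (he : ∀ s, e s < p) (m : σ →₀ ℕ) (a b : MvPowerSeries σ R) :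
    coeff (p • m + e) (expand p hp a * b) =
      ∑ q ∈ antidiagonal m, coeff q.1 a * coeff (p • q.2 + e) b := by
  rw [coeff_mul]
  refine (Finset.sum_of_injOn (fun q => (p • q.1, p • q.2 + e)) ?_ ?_ ?_ ?_).symm
  · rintro ⟨i, j⟩ - ⟨i', j'⟩ - h
    simpa [nsmul_right_inj hp] using h
  · rintro ⟨i, j⟩ h
    simp only [Finset.mem_coe, mem_antidiagonal] at h ⊢
    rw [← add_assoc, ← smul_add, h]
  · rintro ⟨i, j⟩ h hij
    rw [mem_antidiagonal] at h
    by_contra hne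
    obtain ⟨i, -, rfl⟩ := support_expand_subset p hp a (left_ne_zero_of_mul hne)
    obtain ⟨c, rfl⟩ :=
      exists_add_of_le (finsupp_le_of_smul_le_smul_add he (le_self_add.trans_eq h))
    refine hij ⟨(i, c), by simp, ?_⟩
    rw [smul_add, add_assoc] at h
    exact Prod.ext rfl (add_left_cancel h).symm
  · rintro ⟨i, j⟩ -
    rw [coeff_expand_smul]

/-- The map `∑ cₘ xᵐ ↦ ∑ (c_{p m + e})^{1/p} xᵐ`: when all entries of `e` are less than `p`, this
is the coordinate of `x ^ e` in the expansion of a power series along the monomials of degree less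
than `p` in each variable, with `p`-th powers as coefficients. -/
noncomputable def frobeniusCoord (p : ℕ) [ExpChar R p] [PerfectRing R p] (e : σ →₀ ℕ) :
    MvPowerSeries σ R →+ MvPowerSeries σ R where
  toFun s m := (frobeniusEquiv R p).symm (coeff (p • m + e) s)
  map_zero' := funext fun m => by rw [map_zero, map_zero]; rfl
  map_add' s t := funext fun m => by rw [map_add, map_add]; rfl

section FrobeniusCoord

variable {p : ℕ} [ExpChar R p] [PerfectRing R p]

theorem coeff_frobeniusCoord (e m : σ →₀ ℕ) (s : MvPowerSeries σ R) :
    coeff m (frobeniusCoord p e s) = (frobeniusEquiv R p).symm (coeff (p • m + e) s) :=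
  rfl

theorem isCartierLinear_frobeniusCoord {e : σ →₀ ℕ} (he : ∀ s, e s < p) :
    IsCartierLinear p (frobeniusCoord (R := R) p e) := fun a b => by
  classical
  have hp : p ≠ 0 := expChar_ne_zero R p
  ext m
  rw [coeff_frobeniusCoord, ← map_frobenius_expand p hp, map_expand,
    coeff_smul_add_expand_mul hp he, map_sum, coeff_mul]
  refine Finset.sum_congr rfl fun q _ => ?_
  rw [map_mul, coeff_map, frobeniusEquiv_symm_apply_frobenius, coeff_frobeniusCoord]

theorem frobeniusCoord_monomial_self (e : σ →₀ ℕ) :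
    frobeniusCoord p e (monomial e (1 : R)) = 1 := by
  classical
  ext m
  rw [coeff_frobeniusCoord, coeff_monomial, coeff_one]
  by_cases hm : m = 0 <;> simp [expChar_ne_zero R p, hm]

end FrobeniusCoord

/-- The subring of power series not involving the variable `x_u`. -/
def seriesFreeOf (R : Type*) [CommRing R] (u : σ) : Subring (MvPowerSeries σ R) where
  carrier := {g | ∀ m : σ →₀ ℕ, m u ≠ 0 → coeff m g = 0}
  zero_mem' _ _ := map_zero _
  one_mem' _ hm := coeff_monomial_ne (by rintro rfl; exact hm rfl) 1
  add_mem' hf hg m hm := by rw [map_add, hf m hm, hg m hm, add_zero]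
  neg_mem' hf m hm := by rw [map_neg, hf m hm, neg_zero]
  mul_mem' {f g} hf hg m hm := by
    classical
    rw [coeff_mul]
    refine Finset.sum_eq_zero fun q hq => ?_
    rw [← mem_antidiagonal.mp hq, Finsupp.add_apply] at hm
    by_cases h : q.1 u = 0
    · rw [hg q.2 (by rwa [h, zero_add] at hm), mul_zero]
    · rw [hf q.1 h, zero_mul]

variable {u : σ} {g : MvPowerSeries σ R}

theorem coeff_mul_monomial_eq_zero_of_lt (hg : g ∈ seriesFreeOf R u) {d m : σ →₀ ℕ}
    (hm : d u < m u) (r : R) : coeff m (g * monomial d r) = 0 := by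
  classical
  rw [coeff_mul_monomial, hg (m - d) (Nat.sub_ne_zero_of_lt hm), zero_mul, ite_self]

theorem coeff_add_monomial_pow (hg : g ∈ seriesFreeOf R u) {d m : σ →₀ ℕ} (hd : d u ≠ 0) {N : ℕ}
    (hm : N * d u ≤ m u) (r : R) :
    coeff m ((g + monomial d r) ^ N) = coeff m (monomial d r ^ N) := by
  have hlower : ∀ j ∈ Finset.range N,
      coeff m (monomial d r ^ j * g ^ (N - j) * (N.choose j : MvPowerSeries σ R)) = 0 := by
    intro j hj
    have hlt : (j • d) u < m u :=
      (Nat.mul_lt_mul_of_pos_right (Finset.mem_range.mp hj) (Nat.pos_of_ne_zero hd)).trans_le hm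
    rw [monomial_pow, mul_comm (monomial _ _), mul_right_comm]
    exact coeff_mul_monomial_eq_zero_of_lt (mul_mem (pow_mem hg _) (natCast_mem _ _)) hlt _
  rw [add_comm, add_pow, map_sum, Finset.sum_range_succ, Finset.sum_eq_zero hlower]
  simp

theorem frobeniusCoord_add_monomial_pow {p : ℕ} [ExpChar R p] [PerfectRing R p]
    (hg : g ∈ seriesFreeOf R u) {d : σ →₀ ℕ} (hd : d u ≠ 0) (N : ℕ) :
    frobeniusCoord p (N • d) ((g + monomial d 1) ^ N) = 1 := by
  rw [← frobeniusCoord_monomial_self (p := p) (N • d)]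
  ext m
  rw [coeff_frobeniusCoord, coeff_frobeniusCoord, coeff_add_monomial_pow hg hd (by simp),
    monomial_pow, one_pow]

theorem simple_singularity_F_pure_general (p : ℕ) [ExpChar R p] [PerfectRing R p]
    (hg : g ∈ seriesFreeOf R u) {s : Finset σ} (hu : u ∈ s) :
    IsFrobeniusSplit p (MvPowerSeries σ R ⧸ Ideal.span {g + ∏ i ∈ s, X i}) := by
  classical
  let d : σ →₀ ℕ := ∑ i ∈ s, Finsupp.single i 1
  have hd (i : σ) : d i = if i ∈ s then 1 else 0 := by
    simp [d, Finsupp.finsetSum_apply, Finsupp.single_apply]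
  have hprod : ∏ i ∈ s, (X i : MvPowerSeries σ R) = monomial d 1 := by
    simp only [X_def, prod_monomial, Finset.prod_const_one, d]
  have hlt (i : σ) : ((p - 1) • d) i < p := by
    have := expChar_pos R p
    rw [Finsupp.smul_apply, hd]
    split_ifs <;> simp [this]
  rw [hprod]
  exact (isCartierLinear_frobeniusCoord hlt).isFrobeniusSplit_quotient_span_singleton
    (expChar_ne_zero R p) (frobeniusCoord_add_monomial_pow hg (by simp [hd, hu]) (p - 1))

end PowerSeries

/-- Let `k` be a perfect field of characteristic `p > 0`, `n ≥ 2`, and `g` a formal power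
series in `k[[x₀,…,xₙ]]` involving only the variables `x₀, …, x_{n-2}` and with zero constant
term. Set `f = g + x_{n-1} * xₙ` and `R = k[[x₀,…,xₙ]]/(f)`. Then `R` is F-pure: there is an
additive map `φ : R → R` with `φ (a^p * b) = a * φ b` for all `a, b` and `φ 1 = 1`. -/
theorem simple_singularity_F_pure (k : Type*) [Field k] (p n : ℕ) [Fact p.Prime] [CharP k p]
    [PerfectField k] (hn : 2 ≤ n) (g : MvPowerSeries (Fin (n + 1)) k)
    (hg : ∀ m : Fin (n + 1) →₀ ℕ,
      ¬(m ⟨n - 1, Nat.sub_lt_succ n 1⟩ = 0 ∧ m ⟨n, Nat.lt_succ_self n⟩ = 0) →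
        MvPowerSeries.coeff m g = 0)
    (hg0 : MvPowerSeries.constantCoeff g = 0) :
    ∃ φ : (MvPowerSeries (Fin (n + 1)) k ⧸
            Ideal.span {g + MvPowerSeries.X ⟨n - 1, Nat.sub_lt_succ n 1⟩ *
              MvPowerSeries.X ⟨n, Nat.lt_succ_self n⟩}) →+
          (MvPowerSeries (Fin (n + 1)) k ⧸
            Ideal.span {g + MvPowerSeries.X ⟨n - 1, Nat.sub_lt_succ n 1⟩ *
              MvPowerSeries.X ⟨n, Nat.lt_succ_self n⟩}),
      (∀ a b, φ (a ^ p * b) = a * φ b) ∧ φ 1 = 1 := by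
  have huv : (⟨n - 1, Nat.sub_lt_succ n 1⟩ : Fin (n + 1)) ≠ ⟨n, Nat.lt_succ_self n⟩ := by
    rw [Ne, Fin.mk.injEq]
    lia
  rw [← Finset.prod_pair huv]
  exact simple_singularity_F_pure_general p (fun m hm => hg m fun h => hm h.1)
    (Finset.mem_insert_self _ _)
end
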